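/- Let U, B, B' be natural numbers, let A be a U × B' matrix over ℂ, and let e : Fin B → Fin B' be an injective map. Let A_e denote the U × B submatrix of A formed by the columns of A indexed by e. Then the real part of det(A_e · A_eᴴ) is at most the real part of det(A · Aᴴ), where (·)ᴴ denotes the conjugate transpose. (Both determinants are real and nonnegative, since A_e·A_eᴴ and A·Aᴴ are positive semidefinite.) -/

import Mathlib

open Matrix

open scoped MatrixOrder ComplexOrder in
theorem aux_one_le_det {n : ℕ} (R : Matrix (Fin n) (Fin n) ℂ) (hR : R.PosSemidef) :
    1 ≤ (1 + R).det := by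
  have h : (1 + R).det = ∏ i, (1 + (hR.1.eigenvalues i : ℂ)) := by
    have h1 := congrArg (Polynomial.eval (-1 : ℂ)) hR.1.charpoly_eq
    rw [Matrix.eval_charpoly, Polynomial.eval_prod] at h1
    have h2 : Matrix.scalar (Fin n) (-1 : ℂ) - R = -(1 + R) := by
      rw [map_neg, map_one]; abel
    rw [h2, Matrix.det_neg] at h1
    have h3 : ∀ i, Polynomial.eval (-1 : ℂ)
        (Polynomial.X - Polynomial.C (RCLike.ofReal (hR.1.eigenvalues i) : ℂ))
        = (-1) * (1 + (hR.1.eigenvalues i : ℂ)) := by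
      intro i
      simp
      ring
    rw [Finset.prod_congr rfl (fun i _ => h3 i), Finset.prod_mul_distrib,
      Finset.prod_const, Finset.card_univ] at h1
    exact mul_left_cancel₀ (pow_ne_zero _ (by norm_num)) h1
  rw [h]
  have hr : (1 : ℝ) ≤ ∏ i, (1 + hR.1.eigenvalues i) :=
    le_of_eq_of_le (Finset.prod_const_one (s := Finset.univ) (ι := Fin n)).symm
      (Finset.prod_le_prod (fun i _ => zero_le_one)
        fun i _ => by linarith [hR.eigenvalues_nonneg i])
  exact_mod_cast hr

open scoped MatrixOrder ComplexOrder in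
theorem aux_det_le {n : ℕ} (P Q : Matrix (Fin n) (Fin n) ℂ) (hP : P.PosSemidef)
    (hQ : Q.PosSemidef) : P.det ≤ (P + Q).det := by
  by_cases h0 : P.det = 0
  · rw [h0]
    exact (hP.add hQ).det_nonneg
  obtain ⟨S, rfl⟩ := CStarAlgebra.nonneg_iff_eq_star_mul_self.mp hP.nonneg
  have hS : IsUnit S.det := by
    rw [det_mul] at h0
    exact (right_ne_zero_of_mul h0).isUnit
  have hSs : IsUnit (Sᴴ).det := by
    rw [det_conjTranspose]; exact hS.star
  have hR := hQ.conjTranspose_mul_mul_same S⁻¹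
  have e : star S * S + Q = Sᴴ * (1 + (S⁻¹)ᴴ * Q * S⁻¹) * S := by
    rw [conjTranspose_nonsing_inv, mul_add, add_mul, mul_one, star_eq_conjTranspose]
    congr 1
    rw [mul_assoc, mul_assoc, mul_assoc, nonsing_inv_mul _ hS, mul_one, ← mul_assoc,
      mul_nonsing_inv _ hSs, one_mul]
  have h1 := aux_one_le_det _ hR
  have h2 := mul_le_mul_of_nonneg_left h1 hP.det_nonneg
  rw [mul_one] at h2
  refine h2.trans (le_of_eq ?_)
  rw [e, det_mul, det_mul, det_mul, star_eq_conjTranspose]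
  ring

open scoped ComplexOrder in
theorem aux_gram {n : ℕ} {ι κ : Type*} [Fintype ι] [Fintype κ]
    (X : Matrix (Fin n) ι ℂ) (Y : Matrix (Fin n) κ ℂ) :
    (X * Xᴴ).det.re ≤ (X * Xᴴ + Y * Yᴴ).det.re :=
  (Complex.le_def.mp (aux_det_le _ _ (posSemidef_self_mul_conjTranspose X)
    (posSemidef_self_mul_conjTranspose Y))).1

/-- Paper Lemma 2 (matrix form): the Gram determinant of the rows of a complex
matrix is non-decreasing in the set of selected columns. -/
theorem stmt_2 (U B B' : ℕ) (A : Matrix (Fin U) (Fin B') ℂ)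
    (e : Fin B → Fin B') (he : Function.Injective e) :
    ((A.submatrix id e) * (A.submatrix id e)ᴴ).det.re ≤ (A * Aᴴ).det.re := by
  classical
  let C : Matrix (Fin U) {j // ¬ j ∈ Set.range e} ℂ := A.submatrix id Subtype.val
  have key : A * Aᴴ = (A.submatrix id e) * (A.submatrix id e)ᴴ + C * Cᴴ := by
    ext i k
    simp only [mul_apply, Matrix.add_apply, conjTranspose_apply, submatrix_apply, id, C]
    rw [← Fintype.sum_subtype_add_sum_subtype (fun j => j ∈ Set.range e)]
    congr 1
    refine Eq.trans ?_ (Equiv.sum_comp (Equiv.ofInjective e he)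
      (fun j : Set.range e => A i j * star (A k j))).symm
    exact Finset.sum_congr (by ext; simp) fun _ _ => rfl
  rw [key]
  exact aux_gram _ _
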